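/- Let a : ℤ → ℂ satisfy a(0) = 0 and |a(n)| ≤ C·|n|^A for all n ≠ 0, for some constants C ≥ 0 and A ≥ 0. For y > 0 and x ∈ ℝ define F(x, y) = 2·√y · ∑_{n ∈ ℤ, n ≠ 0} a(n) · e^{2πi n x} · K₀(2π|n|y). Then for every Y > 0, ∫_Y^∞ ∫₀¹ y·|F(x,y)|² dx (dy/y²) = (2/π) · ∑_{n ∈ ℤ, n ≠ 0} |a(n)|² · g(2π|n|Y) / |n|, with both sides finite. -/

import Mathlib

open MeasureTheory Complex

/-- The modified Bessel function of the second kind of order `0`: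
`K₀(y) = ∫₀^∞ exp(−y cosh t) dt` for `y > 0`. -/
noncomputable def besselK0 (y : ℝ) : ℝ :=
  ∫ t in Set.Ioi (0 : ℝ), Real.exp (-y * Real.cosh t)

/-- The incomplete integral `g(x) = ∫_x^∞ K₀(y)² dy`. -/
noncomputable def gK0 (x : ℝ) : ℝ :=
  ∫ y in Set.Ioi x, (besselK0 y) ^ 2

/-- The K-Bessel Fourier series
`F(x,y) = 2 √y ∑_{n ≠ 0} a(n) e(nx) K₀(2π|n|y)` (the `n = 0` term vanishes as `a 0 = 0`). -/
noncomputable def besselFourierSeries (a : ℤ → ℂ) (x y : ℝ) : ℂ :=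
  2 * (Real.sqrt y : ℂ) * ∑' n : ℤ,
    a n * Complex.exp (2 * Real.pi * Complex.I * (n : ℂ) * (x : ℂ)) *
      (besselK0 (2 * Real.pi * |(n : ℝ)| * y) : ℂ)

/-!
For fixed `y`, Parseval on the circle turns `∫₀¹ |F(x, y)|² dx` into
`4 y ∑ₙ |a(n)|² K₀(2π|n|y)²`, so after dividing by `y` the integrand on `(Y, ∞)` is a series of
nonnegative functions. Integrating it term by term and rescaling `y` by `2π|n|` produces
`g(2π|n|Y) / (2π|n|)`. The only analytic input is `K₀(y) ≤ √(π / (2y)) e^{-y}`, which follows from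
`cosh t ≥ 1 + t² / 2`: it makes every series converge as soon as `∑ₙ |a(n)| e^{-2π|n|Y} < ∞`, and
polynomial growth of `a` is far more than enough for that.
-/

theorem repr_apply_of_hasSum_smul {ι 𝕜 E : Type*} [RCLike 𝕜] [NormedAddCommGroup E]
    [InnerProductSpace 𝕜 E] (b : HilbertBasis ι 𝕜 E) {c : ι → 𝕜} {v : E}
    (hv : HasSum (fun i => c i • b i) v) (i : ι) : b.repr v i = c i := by
  have hsum : HasSum (fun j => inner 𝕜 (b i) (c j • b j)) (b.repr v i) := by
    rw [b.repr_apply_apply]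
    exact (innerSL 𝕜 (b i)).hasSum hv
  have hsingle : inner 𝕜 (b i) (c i • b i) = c i := by
    rw [inner_smul_right, inner_self_eq_one_of_norm_eq_one (b.orthonormal.1 i), mul_one]
  rw [← hsingle]
  refine hsum.unique (hasSum_single i fun j hj => ?_)
  rw [inner_smul_right, b.orthonormal.2 hj.symm, mul_zero]

section Parseval

open AddCircle

variable {T : ℝ} [Fact (0 < T)] {c : ℤ → ℂ}

theorem fourierCoeff_eq_of_hasSum {f : C(AddCircle T, ℂ)}
    (hf : HasSum (fun n => c n • fourier n) f) (n : ℤ) : fourierCoeff f n = c n := by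
  rw [← fourierCoeff_toLp, ← fourierBasis_repr]
  refine repr_apply_of_hasSum_smul fourierBasis ?_ n
  simpa [Function.comp_def] using (ContinuousMap.toLp (E := ℂ) 2 haarAddCircle ℂ).hasSum hf

theorem hasSum_norm_sq_integral_tsum_fourier (hc : Summable c) :
    HasSum (fun n => ‖c n‖ ^ 2)
      (∫ t : AddCircle T, ‖∑' n, c n * fourier n t‖ ^ 2 ∂haarAddCircle) := by
  have hsum : Summable fun n => c n • (fourier n : C(AddCircle T, ℂ)) :=
    .of_norm (by simpa [norm_smul, fourier_norm] using hc.norm)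
  obtain ⟨f, hf⟩ := hsum
  have hf_apply (t : AddCircle T) : ∑' n, c n * fourier n t = f t :=
    ((ContinuousMap.evalCLM ℂ t).hasSum hf).tsum_eq
  have hparseval := hasSum_sq_fourierCoeff (ContinuousMap.toLp (E := ℂ) 2 haarAddCircle ℂ f)
  simp only [fourierCoeff_toLp, fourierCoeff_eq_of_hasSum hf] at hparseval
  convert hparseval using 1
  refine integral_congr_ae ?_
  filter_upwards [ContinuousMap.coeFn_toLp (E := ℂ) (p := 2) (𝕜 := ℂ) haarAddCircle f] with t ht
  rw [hf_apply, ht]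

theorem hasSum_norm_sq_intervalIntegral_tsum_fourier (hc : Summable c) (s : ℝ) :
    HasSum (fun n => ‖c n‖ ^ 2)
      (T⁻¹ * ∫ x in s..s + T, ‖∑' n, c n * fourier n (x : AddCircle T)‖ ^ 2) := by
  have hparseval := hasSum_norm_sq_integral_tsum_fourier (T := T) hc
  rwa [integral_haarAddCircle, ← AddCircle.intervalIntegral_preimage T s] at hparseval

end Parseval

theorem integrable_tsum_of_summable_integral_norm {α ι E : Type*} [MeasurableSpace α]
    {μ : Measure α} [Countable ι] [NormedAddCommGroup E] [CompleteSpace E] {F : ι → α → E}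
    (hF_int : ∀ i, Integrable (F i) μ) (hF_sum : Summable fun i => ∫ a, ‖F i a‖ ∂μ) :
    Integrable (fun a => ∑' i, F i a) μ := by
  have hsum : ∑' i, ‖(hF_int i).toL1 (F i)‖ₑ ≠ ⊤ := by
    rw [tsum_enorm_ne_top_iff_summable_norm]
    simpa only [L1.norm_of_fun_eq_integral_norm] using hF_sum
  refine (L1.integrable_coeFn (∑' i, (hF_int i).toL1 (F i))).congr ?_
  filter_upwards [Lp.coeFn_tsum hsum, ae_all_iff.2 fun i => (hF_int i).coeFn_toL1]
    with a htsum hcoe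
  simp only [htsum, hcoe]

theorem summable_rpow_mul_exp_neg_nat (A : ℝ) {c : ℝ} (hc : 0 < c) :
    Summable fun n : ℕ => (n : ℝ) ^ A * Real.exp (-c * n) := by
  have hdecay := ((isLittleO_rpow_exp_pos_mul_atTop A (half_pos hc)).comp_tendsto
    tendsto_natCast_atTop_atTop).isBigO.mul
      (Asymptotics.isBigO_refl (fun n : ℕ => Real.exp (-c * n)) Filter.atTop)
  refine summable_of_isBigO_nat (Real.summable_exp_nat_mul_iff.2 (neg_lt_zero.2 (half_pos hc)))
    (hdecay.congr_right fun n => ?_)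
  simp only [Function.comp_apply, ← Real.exp_add]
  ring_nf

theorem summable_norm_mul_exp_neg_of_norm_le_rpow {E : Type*} [SeminormedAddCommGroup E]
    {a : ℤ → E} {C A c : ℝ}
    (ha : ∀ n : ℤ, n ≠ 0 → ‖a n‖ ≤ C * |(n : ℝ)| ^ A) (hc : 0 < c) :
    Summable fun n : ℤ => ‖a n‖ * Real.exp (-c * |(n : ℝ)|) := by
  have hmajorant : Summable fun n : ℤ => C * (|(n : ℝ)| ^ A * Real.exp (-c * |(n : ℝ)|)) := by
    refine Summable.mul_left C (.of_nat_of_neg ?_ ?_) <;>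
      simpa using summable_rpow_mul_exp_neg_nat A hc
  refine hmajorant.of_norm_bounded_eventually ?_
  filter_upwards [(Set.finite_singleton (0 : ℤ)).compl_mem_cofinite] with n hn
  rw [Real.norm_of_nonneg (by positivity), ← mul_assoc]
  gcongr
  exact ha n hn

theorem one_add_sq_div_two_le_cosh (t : ℝ) : 1 + t ^ 2 / 2 ≤ Real.cosh t := by
  have hcosh : Real.cosh t = 1 + 2 * Real.sinh (t / 2) ^ 2 := by
    have h := Real.cosh_two_mul (t / 2)
    rw [Real.cosh_sq, mul_div_cancel₀ t two_ne_zero] at h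
    linarith
  have hsinh : |t / 2| ≤ |Real.sinh (t / 2)| := by
    rw [Real.abs_sinh]
    exact Real.self_le_sinh_iff.2 (abs_nonneg _)
  linarith [sq_le_sq.2 hsinh]

theorem measurable_besselK0 : Measurable besselK0 :=
  StronglyMeasurable.measurable <| StronglyMeasurable.integral_prod_right
    (f := fun y t : ℝ => Real.exp (-y * Real.cosh t))
    (Continuous.stronglyMeasurable (by unfold Function.uncurry; fun_prop))

theorem besselK0_nonneg (y : ℝ) : 0 ≤ besselK0 y :=
  integral_nonneg fun _ => (Real.exp_pos _).le

theorem besselK0_le {y : ℝ} (hy : 0 < y) :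
    besselK0 y ≤ √(Real.pi / (2 * y)) * Real.exp (-y) := by
  have hgauss : IntegrableOn (fun t => Real.exp (-y) * Real.exp (-(y / 2) * t ^ 2)) (Set.Ioi 0) :=
    ((integrable_exp_neg_mul_sq (half_pos hy)).const_mul _).integrableOn
  have hle (t : ℝ) :
      Real.exp (-y * Real.cosh t) ≤ Real.exp (-y) * Real.exp (-(y / 2) * t ^ 2) := by
    rw [← Real.exp_add, Real.exp_le_exp]
    linarith [mul_le_mul_of_nonneg_left (one_add_sq_div_two_le_cosh t) hy.le]
  calc besselK0 y
      ≤ ∫ t in Set.Ioi (0 : ℝ), Real.exp (-y) * Real.exp (-(y / 2) * t ^ 2) :=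
        integral_mono_of_nonneg (.of_forall fun _ => (Real.exp_pos _).le) hgauss (.of_forall hle)
    _ = √(Real.pi / (2 * y)) * Real.exp (-y) := by
        have hsqrt : √(Real.pi / (y / 2)) = 2 * √(Real.pi / (2 * y)) := by
          rw [show Real.pi / (y / 2) = 2 ^ 2 * (Real.pi / (2 * y)) by ring,
            Real.sqrt_mul (by positivity), Real.sqrt_sq zero_le_two]
        rw [integral_const_mul, integral_gaussian_Ioi, hsqrt]
        ring

theorem besselK0_le_of_le {x y : ℝ} (hx : 0 < x) (hxy : x ≤ y) :
    besselK0 y ≤ √(Real.pi / (2 * x)) * Real.exp (-y) :=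
  (besselK0_le (hx.trans_le hxy)).trans (by gcongr)

theorem besselK0_sq_le_of_le {x y : ℝ} (hx : 0 < x) (hxy : x ≤ y) :
    besselK0 y ^ 2 ≤ Real.pi / (2 * x) * Real.exp (-2 * y) := by
  calc besselK0 y ^ 2
      ≤ (√(Real.pi / (2 * x)) * Real.exp (-y)) ^ 2 :=
        pow_le_pow_left₀ (besselK0_nonneg y) (besselK0_le_of_le hx hxy) 2
    _ = Real.pi / (2 * x) * Real.exp (-2 * y) := by
        rw [mul_pow, Real.sq_sqrt (by positivity), ← Real.exp_nat_mul]
        ring_nf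

theorem integrableOn_besselK0_sq {x : ℝ} (hx : 0 < x) :
    IntegrableOn (fun y => besselK0 y ^ 2) (Set.Ioi x) := by
  refine ((integrableOn_exp_mul_Ioi (by norm_num : (-2 : ℝ) < 0) x).const_mul
    (Real.pi / (2 * x))).mono' (measurable_besselK0.pow_const 2).aestronglyMeasurable ?_
  filter_upwards [ae_restrict_mem measurableSet_Ioi] with y hy
  rw [Real.norm_of_nonneg (sq_nonneg _)]
  exact besselK0_sq_le_of_le hx hy.le

theorem gK0_nonneg (x : ℝ) : 0 ≤ gK0 x :=
  integral_nonneg fun _ => sq_nonneg _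

theorem gK0_le {x : ℝ} (hx : 0 < x) : gK0 x ≤ Real.pi / (4 * x) * Real.exp (-2 * x) := by
  calc gK0 x
      ≤ ∫ y in Set.Ioi x, Real.pi / (2 * x) * Real.exp (-2 * y) :=
        setIntegral_mono_on (integrableOn_besselK0_sq hx)
          ((integrableOn_exp_mul_Ioi (by norm_num : (-2 : ℝ) < 0) x).const_mul _)
          measurableSet_Ioi fun y hy => besselK0_sq_le_of_le hx (Set.mem_Ioi.1 hy).le
    _ = Real.pi / (4 * x) * Real.exp (-2 * x) := by
        rw [integral_const_mul, integral_exp_mul_Ioi (by norm_num)]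
        field_simp
        ring

theorem gK0_two_pi_mul_div_le {m Y : ℝ} (hm : 1 ≤ m) (hY : 0 < Y) :
    gK0 (2 * Real.pi * m * Y) / m ≤ (8 * Y)⁻¹ * Real.exp (-(2 * Real.pi * m * Y)) ^ 2 := by
  calc gK0 (2 * Real.pi * m * Y) / m
      ≤ Real.pi / (4 * (2 * Real.pi * m * Y)) * Real.exp (-2 * (2 * Real.pi * m * Y)) / m := by
        gcongr
        exact gK0_le (by positivity)
    _ = (8 * Y)⁻¹ * Real.exp (-(2 * Real.pi * m * Y)) ^ 2 / m ^ 2 := by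
        rw [← Real.exp_nat_mul]
        field_simp
        ring_nf
    _ ≤ (8 * Y)⁻¹ * Real.exp (-(2 * Real.pi * m * Y)) ^ 2 :=
        div_le_self (by positivity) (one_le_pow₀ hm)

theorem integrableOn_besselK0_mul_sq {c Y : ℝ} (hc : 0 < c) (hY : 0 < Y) :
    IntegrableOn (fun y => besselK0 (c * y) ^ 2) (Set.Ioi Y) :=
  (integrableOn_Ioi_comp_mul_left_iff (fun y => besselK0 y ^ 2) Y hc).2
    (integrableOn_besselK0_sq (mul_pos hc hY))

theorem integral_besselK0_mul_sq {c : ℝ} (hc : 0 < c) (Y : ℝ) :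
    ∫ y in Set.Ioi Y, besselK0 (c * y) ^ 2 = gK0 (c * Y) / c := by
  rw [integral_comp_mul_left_Ioi (fun y => besselK0 y ^ 2) Y hc, gK0, smul_eq_mul, inv_mul_eq_div]

section CuspidalZone

/-- The `n`-th Fourier coefficient, in the variable `x`, of `besselFourierSeries a x y / (2 * √y)`;
the `y`-dependence of its norm is what remains to be integrated after Parseval in `x`. The value at
`n = 0` is meaningful only when `a 0 = 0`, since the integral defining `K₀(0)` diverges. -/
noncomputable def besselFourierCoeff (a : ℤ → ℂ) (y : ℝ) (n : ℤ) : ℂ :=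
  a n * besselK0 (2 * Real.pi * |(n : ℝ)| * y)

variable {a : ℤ → ℂ} {y Y : ℝ}

theorem besselFourierSeries_eq_tsum_fourier (a : ℤ → ℂ) (x y : ℝ) :
    besselFourierSeries a x y =
      2 * (√y : ℂ) * ∑' n : ℤ, besselFourierCoeff a y n * fourier n (x : UnitAddCircle) := by
  simp only [besselFourierSeries, besselFourierCoeff, fourier_coe_apply, ofReal_one, div_one,
    mul_right_comm (a _)]

theorem norm_besselFourierCoeff (a : ℤ → ℂ) (y : ℝ) (n : ℤ) :
    ‖besselFourierCoeff a y n‖ = ‖a n‖ * besselK0 (2 * Real.pi * |(n : ℝ)| * y) := by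
  rw [besselFourierCoeff, norm_mul, norm_real, Real.norm_of_nonneg (besselK0_nonneg _)]

theorem hasSum_norm_besselFourierCoeff_sq (hy : 0 < y) (hsum : Summable (besselFourierCoeff a y)) :
    HasSum (fun n => 4 * ‖besselFourierCoeff a y n‖ ^ 2)
      ((∫ x in (0 : ℝ)..1, y * ‖besselFourierSeries a x y‖ ^ 2) / y ^ 2) := by
  have hparseval := hasSum_norm_sq_intervalIntegral_tsum_fourier (T := 1) hsum 0
  have hnorm (x : ℝ) : y * ‖besselFourierSeries a x y‖ ^ 2 = 4 * y ^ 2 *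
      ‖∑' n : ℤ, besselFourierCoeff a y n * fourier n (x : UnitAddCircle)‖ ^ 2 := by
    rw [besselFourierSeries_eq_tsum_fourier, norm_mul, norm_mul, mul_pow, mul_pow, norm_real,
      norm_ofNat, Real.norm_of_nonneg (Real.sqrt_nonneg y), Real.sq_sqrt hy.le]
    ring
  simp only [hnorm, intervalIntegral.integral_const_mul]
  rw [mul_right_comm, mul_div_cancel_right₀ _ (pow_ne_zero 2 hy.ne')]
  simpa only [inv_one, one_mul, zero_add] using hparseval.mul_left 4

theorem integrableOn_norm_besselFourierCoeff_sq (ha0 : a 0 = 0) (hY : 0 < Y) (n : ℤ) :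
    IntegrableOn (fun y => ‖besselFourierCoeff a y n‖ ^ 2) (Set.Ioi Y) := by
  simp only [norm_besselFourierCoeff, mul_pow]
  rcases eq_or_ne n 0 with rfl | hn
  · simp [ha0]
  · exact (integrableOn_besselK0_mul_sq (by positivity) hY).const_mul _

theorem integral_norm_besselFourierCoeff_sq (ha0 : a 0 = 0) (Y : ℝ) (n : ℤ) :
    ∫ y in Set.Ioi Y, ‖besselFourierCoeff a y n‖ ^ 2 =
      (2 * Real.pi)⁻¹ * (‖a n‖ ^ 2 * gK0 (2 * Real.pi * |(n : ℝ)| * Y) / |(n : ℝ)|) := by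
  simp only [norm_besselFourierCoeff, mul_pow]
  rcases eq_or_ne n 0 with rfl | hn
  · simp [ha0]
  · rw [integral_const_mul, integral_besselK0_mul_sq (by positivity)]
    field_simp

theorem summable_besselFourierCoeff (ha0 : a 0 = 0)
    (ha : Summable fun n : ℤ => ‖a n‖ * Real.exp (-(2 * Real.pi * |(n : ℝ)| * Y)))
    (hY : 0 < Y) (hYy : Y ≤ y) : Summable (besselFourierCoeff a y) := by
  refine (ha.mul_left √(Real.pi / (2 * (2 * Real.pi * Y)))).of_norm_bounded fun n => ?_
  rcases eq_or_ne n 0 with rfl | hn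
  · simp [besselFourierCoeff, ha0]
  have hn1 : (1 : ℝ) ≤ |(n : ℝ)| := by exact_mod_cast Int.one_le_abs hn
  have hle : 2 * Real.pi * Y ≤ 2 * Real.pi * |(n : ℝ)| * y :=
    mul_le_mul (le_mul_of_one_le_right Real.two_pi_pos.le hn1) hYy hY.le (by positivity)
  rw [norm_besselFourierCoeff, mul_left_comm]
  gcongr
  refine (besselK0_le_of_le (by positivity) hle).trans ?_
  gcongr

theorem summable_norm_sq_mul_gK0_div (ha0 : a 0 = 0)
    (ha : Summable fun n : ℤ => ‖a n‖ * Real.exp (-(2 * Real.pi * |(n : ℝ)| * Y)))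
    (hY : 0 < Y) :
    Summable fun n : ℤ => ‖a n‖ ^ 2 * gK0 (2 * Real.pi * |(n : ℝ)| * Y) / |(n : ℝ)| := by
  have ha_sq : Summable fun n : ℤ =>
      (‖a n‖ * Real.exp (-(2 * Real.pi * |(n : ℝ)| * Y))) ^ 2 := by
    simpa only [Function.comp_def, ← sq] using
      (ha.mul_of_nonneg ha (fun _ => by positivity) fun _ => by positivity).comp_injective
        (i := fun n => (n, n)) fun _ _ h => (Prod.ext_iff.1 h).1
  refine .of_nonneg_of_le (fun n => ?_) (fun n => ?_) (ha_sq.mul_left (8 * Y)⁻¹)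
  · exact div_nonneg (mul_nonneg (sq_nonneg _) (gK0_nonneg _)) (abs_nonneg _)
  · rcases eq_or_ne n 0 with rfl | hn
    · simp [ha0]
    · have hn1 : (1 : ℝ) ≤ |(n : ℝ)| := by exact_mod_cast Int.one_le_abs hn
      rw [mul_div_assoc, mul_pow, mul_left_comm]
      gcongr
      exact gK0_two_pi_mul_div_le hn1 hY

end CuspidalZone

theorem cuspidal_zone_unfolding_general (a : ℤ → ℂ) (ha0 : a 0 = 0) (Y : ℝ) (hY : 0 < Y)
    (ha : Summable fun n : ℤ => ‖a n‖ * Real.exp (-(2 * Real.pi * |(n : ℝ)| * Y))) :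
    IntegrableOn
      (fun y : ℝ => (∫ x in (0 : ℝ)..1, y * ‖besselFourierSeries a x y‖ ^ 2) / y ^ 2)
      (Set.Ioi Y) ∧
    Summable (fun n : ℤ => ‖a n‖ ^ 2 * gK0 (2 * Real.pi * |(n : ℝ)| * Y) / |(n : ℝ)|) ∧
    (∫ y in Set.Ioi Y,
        (∫ x in (0 : ℝ)..1, y * ‖besselFourierSeries a x y‖ ^ 2) / y ^ 2)
      = (2 / Real.pi) *
        ∑' n : ℤ, ‖a n‖ ^ 2 * gK0 (2 * Real.pi * |(n : ℝ)| * Y) / |(n : ℝ)| := by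
  have hparseval : Set.EqOn (fun y => ∑' n, 4 * ‖besselFourierCoeff a y n‖ ^ 2)
      (fun y => (∫ x in (0 : ℝ)..1, y * ‖besselFourierSeries a x y‖ ^ 2) / y ^ 2) (Set.Ioi Y) :=
    fun y hy => (hasSum_norm_besselFourierCoeff_sq (hY.trans hy)
      (summable_besselFourierCoeff ha0 ha hY hy.le)).tsum_eq
  have hint (n : ℤ) : IntegrableOn (fun y => 4 * ‖besselFourierCoeff a y n‖ ^ 2) (Set.Ioi Y) :=
    (integrableOn_norm_besselFourierCoeff_sq ha0 hY n).const_mul 4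
  have hval (n : ℤ) : ∫ y in Set.Ioi Y, 4 * ‖besselFourierCoeff a y n‖ ^ 2 =
      2 / Real.pi * (‖a n‖ ^ 2 * gK0 (2 * Real.pi * |(n : ℝ)| * Y) / |(n : ℝ)|) := by
    rw [integral_const_mul, integral_norm_besselFourierCoeff_sq ha0]
    ring
  have hsummable := summable_norm_sq_mul_gK0_div ha0 ha hY
  have hnorm : Summable fun n => ∫ y in Set.Ioi Y, ‖4 * ‖besselFourierCoeff a y n‖ ^ 2‖ := by
    simpa [hval] using hsummable.mul_left (2 / Real.pi)
  refine ⟨?_, hsummable, ?_⟩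
  · exact IntegrableOn.congr_fun (integrable_tsum_of_summable_integral_norm hint hnorm) hparseval
      measurableSet_Ioi
  · rw [← setIntegral_congr_fun measurableSet_Ioi hparseval,
      ← integral_tsum_of_summable_integral_norm hint hnorm, ← tsum_mul_left]
    exact tsum_congr hval

/-- Unfolding/Parseval computation of the cuspidal-zone integral: if `a 0 = 0` and
`|a(n)| ≤ C|n|^A`, then for every `Y > 0`,
`∫_Y^∞ ∫₀¹ y |F(x,y)|² dx dy/y² = (2/π) ∑_{n ≠ 0} |a(n)|² g(2π|n|Y)/|n|`,
with both sides finite. -/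
theorem cuspidal_zone_unfolding (a : ℤ → ℂ) (C A : ℝ) (hC : 0 ≤ C) (hA : 0 ≤ A)
    (ha0 : a 0 = 0) (hbd : ∀ n : ℤ, n ≠ 0 → ‖a n‖ ≤ C * |(n : ℝ)| ^ A)
    (Y : ℝ) (hY : 0 < Y) :
    IntegrableOn
      (fun y : ℝ => (∫ x in (0 : ℝ)..1, y * ‖besselFourierSeries a x y‖ ^ 2) / y ^ 2)
      (Set.Ioi Y) ∧
    Summable (fun n : ℤ => ‖a n‖ ^ 2 * gK0 (2 * Real.pi * |(n : ℝ)| * Y) / |(n : ℝ)|) ∧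
    (∫ y in Set.Ioi Y,
        (∫ x in (0 : ℝ)..1, y * ‖besselFourierSeries a x y‖ ^ 2) / y ^ 2)
      = (2 / Real.pi) *
        ∑' n : ℤ, ‖a n‖ ^ 2 * gK0 (2 * Real.pi * |(n : ℝ)| * Y) / |(n : ℝ)| := by
  refine cuspidal_zone_unfolding_general a ha0 Y hY ?_
  simpa [mul_right_comm] using
    summable_norm_mul_exp_neg_of_norm_le_rpow hbd (c := 2 * Real.pi * Y) (by positivity)
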